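/- Failure of every positive Hölder modulus for the envelope derivative in the degenerate counterexample: Define a : ℝ → ℝ by a(θ) = (1/4)·exp(−1/θ²)·sin(10/θ) for θ ≠ 0 and a(0) = 0; define t⋆ : ℝ → ℝ by t⋆(θ) = −sign(a(θ))·(log(1/|a(θ)|))^{−1/2} if a(θ) ≠ 0 and t⋆(θ) = 0 otherwise; and define G : ℝ → ℝ by G(θ) = a′(θ)·t⋆(θ), where a′ is the derivative of a. Then for every nonzero integer k, with θ_k := 10/(kπ), one has G(θ_k) = 0, and for every α > 0 the function G is not α-Hölder continuous on any neighborhood of θ_k: for all C > 0 and all ε > 0 there exists θ with 0 < |θ − θ_k| < ε and |G(θ) − G(θ_k)| > C·|θ − θ_k|^α. -/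

import Mathlib

/-- `a(θ) = (1/4)·exp(-1/θ²)·sin(10/θ)` (with `a(0) = 0`). -/
noncomputable def aFun (θ : ℝ) : ℝ :=
  if θ = 0 then 0 else 1 / 4 * Real.exp (-1 / θ ^ 2) * Real.sin (10 / θ)

/-- `t⋆(θ) = -sign(a(θ))·(log(1/|a(θ)|))^{-1/2}` if `a(θ) ≠ 0`, and `t⋆(θ) = 0` otherwise. -/
noncomputable def tstarFun (θ : ℝ) : ℝ :=
  if aFun θ = 0 then 0
  else -(Real.sign (aFun θ)) * Real.log (1 / |aFun θ|) ^ (-(1 : ℝ) / 2)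

/-- The envelope derivative `G(θ) = a′(θ)·t⋆(θ)`. -/
noncomputable def GFun (θ : ℝ) : ℝ := deriv aFun θ * tstarFun θ

/-!
Where `a` tends to `0`, so does `|t⋆| = (log (1 / |a|)) ^ (-1 / 2)`, but more slowly than any
positive power of `|a|`. Each `θ_k` is a simple zero of `a`, so near it `|a θ|` is
comparable to `|θ - θ_k|` and `a'` stays away from `0`. Hence `|θ - θ_k| ^ α = o(G θ)` for every
`α > 0`, although `G θ_k = 0`.
-/

open Asymptotics Filter Real
open scoped Topology

section LogScale

variable {s α : ℝ}

/-- The odd extension of the logarithmic scale `u ↦ (log (1 / u)) ^ s` from `0 < u < 1` to both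
signs of `u`. At `s = -1 / 2` it inverts the flat function `t ↦ sign t * exp (-1 / t ^ 2)`, and
`t⋆ = -signedLogRpow (-1 / 2) ∘ a`; the factor `sign u` encodes the value `0` at `u = 0`. -/
noncomputable def signedLogRpow (s u : ℝ) : ℝ :=
  Real.sign u * log (1 / |u|) ^ s

lemma signedLogRpow_zero : signedLogRpow s 0 = 0 := by
  simp [signedLogRpow]

lemma abs_signedLogRpow {u : ℝ} (hu : u ≠ 0) (hu1 : |u| ≤ 1) :
    |signedLogRpow s u| = |log (|u|)| ^ s := by
  have hsign : |Real.sign u| = 1 := by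
    rcases Real.sign_apply_eq_of_ne_zero u hu with h | h <;> simp [h]
  have hlog : log (1 / |u|) = |log (|u|)| := by
    rw [one_div, log_inv, abs_of_nonpos (log_nonpos (abs_nonneg u) hu1)]
  rw [signedLogRpow, hlog, abs_mul, hsign, one_mul, abs_of_nonneg (by positivity)]

lemma isLittleO_rpow_abs_log_rpow_nhdsGT_zero (s : ℝ) (hα : 0 < α) :
    (fun u ↦ u ^ α) =o[𝓝[>] 0] fun u ↦ |log u| ^ s := by
  have hunit : ∀ᶠ u : ℝ in 𝓝[>] 0, u ∈ Set.Ioo 0 1 := Ioo_mem_nhdsGT one_pos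
  have hinv := (isLittleO_abs_log_rpow_rpow_nhdsGT_zero (-s) (neg_lt_zero.2 hα)).inv_rev <| by
    filter_upwards [hunit] with u hu hzero
    have hlog : 0 < |log u| := abs_pos.2 (log_neg hu.1 hu.2).ne
    exact absurd hzero (rpow_pos_of_pos hlog _).ne'
  refine hinv.congr' ?_ (.of_forall fun u ↦ ?_)
  · filter_upwards [hunit] with u hu
    rw [rpow_neg hu.1.le, inv_inv]
  · simp only [rpow_neg (abs_nonneg _), inv_inv]

lemma isLittleO_abs_rpow_signedLogRpow (s : ℝ) (hα : 0 < α) :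
    (fun u ↦ |u| ^ α) =o[𝓝[≠] 0] signedLogRpow s := by
  have habs : (fun u ↦ |u| ^ α) =o[𝓝[≠] 0] fun u ↦ |log (|u|)| ^ s :=
    (isLittleO_rpow_abs_log_rpow_nhdsGT_zero s hα).comp_tendsto tendsto_abs_nhdsNE_zero
  have hsmall : ∀ᶠ u : ℝ in 𝓝[≠] 0, |u| < 1 :=
    (continuous_abs.tendsto' 0 0 abs_zero).mono_left nhdsWithin_le_nhds
      |>.eventually_lt_const one_pos
  refine (habs.congr' .rfl ?_).of_abs_right
  filter_upwards [hsmall, self_mem_nhdsWithin] with u hu1 hu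
  exact (abs_signedLogRpow hu hu1.le).symm

end LogScale

section SimpleZero

lemma isBigO_sub_of_hasDerivAt {𝕜 F : Type*} [NontriviallyNormedField 𝕜] [NormedAddCommGroup F]
    [NormedSpace 𝕜 F] {f : 𝕜 → F} {f' : F} {x : 𝕜} (hf : HasDerivAt f f' x) (hf' : f' ≠ 0) :
    (fun y ↦ y - x) =O[𝓝 x] fun y ↦ f y - f x :=
  (hf.isTheta_sub hf').isBigO_symm.comp_tendsto (tendsto_id.prodMk tendsto_const_pure)

theorem isLittleO_abs_sub_rpow_deriv_mul_signedLogRpow {a : ℝ → ℝ} {x α : ℝ} (s : ℝ)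
    (hα : 0 < α) (hax : a x = 0) (hd : deriv a x ≠ 0) (hcont : ContinuousAt (deriv a) x) :
    (fun θ ↦ |θ - x| ^ α) =o[𝓝[≠] x] fun θ ↦ deriv a θ * signedLogRpow s (a θ) := by
  have hderiv : HasDerivAt a (deriv a x) x := (differentiableAt_of_deriv_ne_zero hd).hasDerivAt
  have hlin : (fun θ ↦ |θ - x|) =O[𝓝[≠] x] fun θ ↦ |a θ| := by
    simpa [hax] using ((isBigO_sub_of_hasDerivAt hderiv hd).mono nhdsWithin_le_nhds).norm_norm
  have hpow : (fun θ ↦ |θ - x| ^ α) =O[𝓝[≠] x] fun θ ↦ |a θ| ^ α :=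
    hlin.rpow hα.le (.of_forall fun _ ↦ abs_nonneg _)
  have hscale : (fun θ ↦ |a θ| ^ α) =o[𝓝[≠] x] fun θ ↦ signedLogRpow s (a θ) :=
    (isLittleO_abs_rpow_signedLogRpow s hα).comp_tendsto (hax ▸ hderiv.tendsto_nhdsNE hd)
  have hone : (fun _ ↦ (1 : ℝ)) =O[𝓝[≠] x] deriv a :=
    (isBigO_const_const 1 hd _).trans
      (((isEquivalent_const_iff_tendsto hd).2 hcont).isBigO_symm.mono nhdsWithin_le_nhds)
  simpa using hone.mul_isLittleO (hpow.trans_isLittleO hscale)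

end SimpleZero

section NotHolder

lemma eventually_mul_norm_lt_norm_of_isLittleO {ι E F : Type*} [NormedAddCommGroup E]
    [SeminormedAddCommGroup F] {l : Filter ι} {f : ι → E} {g : ι → F} (h : f =o[l] g)
    (hf : ∀ᶠ i in l, f i ≠ 0) (C : ℝ) : ∀ᶠ i in l, C * ‖f i‖ < ‖g i‖ := by
  obtain ⟨n, hn⟩ := exists_nat_gt C
  filter_upwards [isLittleO_iff_nat_mul_le.1 h n, hf] with i hle hi
  exact (mul_lt_mul_of_pos_right hn (norm_pos_iff.2 hi)).trans_le hle

lemma exists_mul_abs_sub_rpow_lt_norm_of_isLittleO {F : Type*} [SeminormedAddCommGroup F]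
    {g : ℝ → F} {x α ε : ℝ} (h : (fun θ ↦ |θ - x| ^ α) =o[𝓝[≠] x] g) (C : ℝ) (hε : 0 < ε) :
    ∃ θ, 0 < |θ - x| ∧ |θ - x| < ε ∧ C * |θ - x| ^ α < ‖g θ‖ := by
  have hpos : ∀ᶠ θ in 𝓝[≠] x, 0 < |θ - x| :=
    eventually_mem_nhdsWithin.mono fun _ hθ ↦ abs_pos.2 (sub_ne_zero.2 hθ)
  have hball : ∀ᶠ θ in 𝓝[≠] x, |θ - x| < ε :=
    nhdsWithin_le_nhds (Metric.ball_mem_nhds x hε)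
  have hlt := eventually_mul_norm_lt_norm_of_isLittleO h
    (hpos.mono fun _ hθ ↦ (rpow_pos_of_pos hθ α).ne') C
  obtain ⟨θ, hθ, hθε, hθC⟩ := (hpos.and (hball.and hlt)).exists
  rw [norm_of_nonneg (rpow_nonneg hθ.le α)] at hθC
  exact ⟨θ, hθ, hθε, hθC⟩

end NotHolder

section Amplitude

-- At `θ = 0` both divisions are `0` in Lean, so the formula vanishes there as well.
lemma aFun_eq : aFun = fun θ ↦ 1 / 4 * exp (-1 / θ ^ 2) * sin (10 / θ) := by
  ext θ
  rcases eq_or_ne θ 0 with rfl | hθ <;> simp [aFun, *]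

lemma aFun_eq_zero_iff {θ : ℝ} : aFun θ = 0 ↔ sin (10 / θ) = 0 := by
  simp [aFun_eq, (exp_pos _).ne']

lemma analyticAt_aFun {θ : ℝ} (hθ : θ ≠ 0) : AnalyticAt ℝ aFun θ := by
  rw [aFun_eq]
  fun_prop (disch := positivity)

lemma deriv_aFun_of_eq_zero {θ : ℝ} (hθ : θ ≠ 0) (hzero : aFun θ = 0) :
    deriv aFun θ = 1 / 4 * exp (-1 / θ ^ 2) * (cos (10 / θ) * (-10 / θ ^ 2)) := by
  have hinner : HasDerivAt (fun y : ℝ ↦ 10 / y) (-10 / θ ^ 2) θ := by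
    simpa using (hasDerivAt_const θ (10 : ℝ)).fun_div (hasDerivAt_id' θ) hθ
  have henv : DifferentiableAt ℝ (fun y : ℝ ↦ 1 / 4 * exp (-1 / y ^ 2)) θ := by
    fun_prop (disch := positivity)
  have hprod := (henv.hasDerivAt.fun_mul hinner.sin).deriv
  rwa [← aFun_eq, aFun_eq_zero_iff.1 hzero, mul_zero, zero_add] at hprod

lemma deriv_aFun_ne_zero {θ : ℝ} (hθ : θ ≠ 0) (hzero : aFun θ = 0) : deriv aFun θ ≠ 0 := by
  have hcos : cos (10 / θ) ≠ 0 := fun hcos ↦ by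
    simpa [aFun_eq_zero_iff.1 hzero, hcos] using sin_sq_add_cos_sq (10 / θ)
  rw [deriv_aFun_of_eq_zero hθ hzero]
  simp [hθ, hcos, (exp_pos _).ne']

lemma aFun_ten_div_int_mul_pi (k : ℤ) : aFun (10 / (k * π)) = 0 := by
  rw [aFun_eq_zero_iff, div_div_cancel₀ (by norm_num), sin_int_mul_pi]

end Amplitude

section EnvelopeDerivative

lemma tstarFun_eq (θ : ℝ) : tstarFun θ = -signedLogRpow (-1 / 2) (aFun θ) := by
  rw [tstarFun, signedLogRpow]
  split_ifs with h <;> simp [h]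

lemma GFun_eq (θ : ℝ) : GFun θ = -(deriv aFun θ * signedLogRpow (-1 / 2) (aFun θ)) := by
  rw [GFun, tstarFun_eq, mul_neg]

lemma GFun_of_aFun_eq_zero {θ : ℝ} (hzero : aFun θ = 0) : GFun θ = 0 := by
  simp [GFun_eq, hzero, signedLogRpow_zero]

theorem isLittleO_abs_sub_rpow_GFun {x α : ℝ} (hα : 0 < α) (hx : x ≠ 0) (hzero : aFun x = 0) :
    (fun θ ↦ |θ - x| ^ α) =o[𝓝[≠] x] GFun := by
  rw [funext GFun_eq]
  exact (isLittleO_abs_sub_rpow_deriv_mul_signedLogRpow _ hα hzero (deriv_aFun_ne_zero hx hzero)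
    (analyticAt_aFun hx).deriv.continuousAt).neg_right

end EnvelopeDerivative

/-- **Failure of every positive Hölder modulus for the envelope derivative.**
For every nonzero integer `k`, with `θ_k = 10 / (k π)`, one has `G(θ_k) = 0` and for every
`α > 0` the function `G` is not `α`-Hölder continuous on any neighborhood of `θ_k`:
for all `C > 0` and `ε > 0` there exists `θ` with `0 < |θ - θ_k| < ε` and
`|G(θ) - G(θ_k)| > C·|θ - θ_k|^α`. -/
theorem envelope_derivative_not_Holder (k : ℤ) (hk : k ≠ 0) :
    GFun (10 / ((k : ℝ) * Real.pi)) = 0 ∧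
    ∀ α : ℝ, 0 < α → ∀ Cst : ℝ, 0 < Cst → ∀ ε : ℝ, 0 < ε →
      ∃ θ : ℝ, 0 < |θ - 10 / ((k : ℝ) * Real.pi)| ∧
        |θ - 10 / ((k : ℝ) * Real.pi)| < ε ∧
        Cst * |θ - 10 / ((k : ℝ) * Real.pi)| ^ α <
          |GFun θ - GFun (10 / ((k : ℝ) * Real.pi))| := by
  have hzero := aFun_ten_div_int_mul_pi k
  have hθk : (10 / (k * π) : ℝ) ≠ 0 := by positivity
  have hG := GFun_of_aFun_eq_zero hzero
  refine ⟨hG, fun α hα C _ ε hε ↦ ?_⟩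
  simpa only [hG, sub_zero, norm_eq_abs] using
    exists_mul_abs_sub_rpow_lt_norm_of_isLittleO (isLittleO_abs_sub_rpow_GFun hα hθk hzero) C hε
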